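/- Linearization of an Euler vector field at the diagonal (content of the Lyapunov-bundle lemma): let X be an Euler vector field on an open set U ⊆ ℝ^d × ℝ^d and let p = (a, a) ∈ Δ ∩ U. Then X(p) = 0, and the derivative DX(p) : ℝ^d × ℝ^d → ℝ^d × ℝ^d is given by DX(p)(u, v) = (0, v − u). In particular DX(p) ∘ DX(p) = DX(p) (its only eigenvalues are 0 and 1), its kernel is the tangent space {(u, u) : u ∈ ℝ^d} of the diagonal, and its range is the subspace N = {0} × ℝ^d, on which DX(p) acts as the identity. -/

import Mathlib

open Set

noncomputable section

/-- Points of `ℝ^d × ℝ^d`. -/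
abbrev Pt (d : ℕ) := EuclideanSpace ℝ (Fin d) × EuclideanSpace ℝ (Fin d)

/-- The diagonal `Δ = {(x,x)}` in `ℝ^d × ℝ^d`. -/
def Diag (d : ℕ) : Set (Pt d) := {p | p.1 = p.2}

/-- The action `Xf : q ↦ Df(q)(X(q))` of a vector field on a function. -/
def vfApply {d : ℕ} (X : Pt d → Pt d) (f : Pt d → ℝ) : Pt d → ℝ :=
  fun q => fderiv ℝ f q (X q)

/-- `g` vanishes to order `m` on `Δ ∩ U`: all iterated Fréchet derivatives of order `< m`
vanish at every point of `Δ ∩ U`. -/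
def VanishesToOrder {d : ℕ} (m : ℕ) (g : Pt d → ℝ) (U : Set (Pt d)) : Prop :=
  ∀ k < m, ∀ p ∈ Diag d ∩ U, iteratedFDeriv ℝ k g p = 0

/-- `X` is an Euler vector field on the open set `U ⊆ ℝ^d × ℝ^d`: it is smooth, its first
`d` components vanish identically, and for every smooth `f` vanishing on `Δ ∩ U` the
function `Xf − f` vanishes to order `2` on `Δ ∩ U`. -/
structure IsEulerVF {d : ℕ} (X : Pt d → Pt d) (U : Set (Pt d)) : Prop where
  smooth : ContDiffOn ℝ (⊤ : ℕ∞) X U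
  fiber : ∀ q ∈ U, (X q).1 = 0
  euler : ∀ f : Pt d → ℝ, ContDiffOn ℝ (⊤ : ℕ∞) f U → (∀ p ∈ Diag d ∩ U, f p = 0) →
    VanishesToOrder 2 (fun q => vfApply X f q - f q) U

/-!
For a linear test function `L` vanishing on the diagonal, `XL = L ∘ X`, so the Euler condition says
that the 1-jets of `L ∘ X` and `L` agree at `p`: `L (X p) = L p` and `L ∘ DX(p) = L`. Such `L` are
the functionals `(x, y) ↦ φ (y - x)`, and they determine a vertical vector. As `X p` and all values
of `DX(p)` are vertical, both are given by the projection `(u, v) ↦ (0, v - u)`.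
-/

section VerticalProj

variable (R E : Type*) [Ring R] [AddCommGroup E] [Module R E] [TopologicalSpace E]
  [IsTopologicalAddGroup E]

/-- The projection `(u, v) ↦ (0, v - u)` of `E × E` onto the vertical subspace `{0} × E` along the
diagonal; it is the linearization of an Euler vector field at a point of the diagonal. -/
def verticalProj : E × E →L[R] E × E :=
  .inr R E E ∘L (.snd R E E - .fst R E E)

variable {E}

theorem verticalProj_apply (w : E × E) : verticalProj R E w = (0, w.2 - w.1) := rfl

theorem verticalProj_eq_zero_iff {w : E × E} : verticalProj R E w = 0 ↔ w.1 = w.2 := by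
  rw [verticalProj_apply, Prod.mk_eq_zero, sub_eq_zero, eq_comm (a := w.2)]
  exact and_iff_right rfl

theorem verticalProj_eq_self_iff {w : E × E} : verticalProj R E w = w ↔ w.1 = 0 := by
  simp +contextual [verticalProj_apply, Prod.ext_iff, eq_comm]

theorem exists_verticalProj_eq_iff {w : E × E} : (∃ u, verticalProj R E u = w) ↔ w.1 = 0 := by
  refine ⟨?_, fun hw => ⟨w, (verticalProj_eq_self_iff R).2 hw⟩⟩
  rintro ⟨u, rfl⟩
  rfl

variable (E) in
theorem verticalProj_comp_self : verticalProj R E ∘L verticalProj R E = verticalProj R E :=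
  ContinuousLinearMap.ext fun _ => (verticalProj_eq_self_iff R).2 rfl

theorem eq_verticalProj_of_forall_dual_eq [TopologicalSpace R] [SeparatingDual R E] {z w : E × E}
    (hz : z.1 = 0) (h : ∀ L : StrongDual R (E × E), (∀ x, L (x, x) = 0) → L z = L w) :
    z = verticalProj R E w := by
  suffices z.2 = w.2 - w.1 from Prod.ext hz this
  refine (SeparatingDual.eq_iff_forall_dual_eq (R := R)).2 fun φ => ?_
  simpa [hz] using h (φ ∘L (.snd R E E - .fst R E E)) (by simp)

end VerticalProj

section FirstOrderJet

variable {𝕜 E F G : Type*} [NontriviallyNormedField 𝕜] [NormedAddCommGroup E] [NormedSpace 𝕜 E]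
  [NormedAddCommGroup F] [NormedSpace 𝕜 F] [NormedAddCommGroup G] [NormedSpace 𝕜 G]

theorem iteratedFDeriv_zero_eq_zero_iff {f : E → F} {x : E} :
    iteratedFDeriv 𝕜 0 f x = 0 ↔ f x = 0 := by
  rw [← norm_eq_zero, norm_iteratedFDeriv_zero, norm_eq_zero]

theorem iteratedFDeriv_one_eq_zero_iff {f : E → F} {x : E} :
    iteratedFDeriv 𝕜 1 f x = 0 ↔ fderiv 𝕜 f x = 0 := by
  rw [← norm_eq_zero, norm_iteratedFDeriv_one, norm_eq_zero]

theorem comp_fderiv_eq_of_fderiv_sub_eq_zero {X : E → E} {p : E} (hX : DifferentiableAt 𝕜 X p)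
    (L : E →L[𝕜] F) (h : fderiv 𝕜 (fun q => L (X q) - L q) p = 0) : L ∘L fderiv 𝕜 X p = L := by
  have hderiv : HasFDerivAt (fun q => L (X q) - L q) (L ∘L fderiv 𝕜 X p - L) p :=
    (L.hasFDerivAt.comp p hX.hasFDerivAt).sub L.hasFDerivAt
  exact sub_eq_zero.1 (hderiv.fderiv.symm.trans h)

theorem fst_fderiv_eq_zero_of_eventually {X : E → F × G} {p : E} (hX : DifferentiableAt 𝕜 X p)
    (h : ∀ᶠ q in nhds p, (X q).1 = 0) (w : E) : (fderiv 𝕜 X p w).1 = 0 := by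
  have hconst : HasFDerivAt (fun q => (X q).1) (0 : E →L[𝕜] F) p :=
    (hasFDerivAt_const 0 p).congr_of_eventuallyEq h
  exact DFunLike.congr_fun (hX.hasFDerivAt.fst.unique hconst) w

end FirstOrderJet

section Linearization

variable {𝕜 E : Type*} [NontriviallyNormedField 𝕜] [NormedAddCommGroup E] [NormedSpace 𝕜 E]
  [SeparatingDual 𝕜 E] {X : E × E → E × E} {p : E × E}

theorem eq_zero_of_forall_dual_apply_eq (hp : p.1 = p.2) (hfiber : (X p).1 = 0)
    (h : ∀ L : StrongDual 𝕜 (E × E), (∀ x, L (x, x) = 0) → L (X p) = L p) : X p = 0 := by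
  rw [eq_verticalProj_of_forall_dual_eq 𝕜 hfiber h]
  exact (verticalProj_eq_zero_iff 𝕜).2 hp

theorem fderiv_eq_verticalProj_of_forall_dual_fderiv_eq_zero
    (hX : DifferentiableAt 𝕜 X p) (hfiber : ∀ᶠ q in nhds p, (X q).1 = 0)
    (h : ∀ L : StrongDual 𝕜 (E × E), (∀ x, L (x, x) = 0) →
      fderiv 𝕜 (fun q => L (X q) - L q) p = 0) :
    fderiv 𝕜 X p = verticalProj 𝕜 E := by
  refine ContinuousLinearMap.ext fun w => eq_verticalProj_of_forall_dual_eq 𝕜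
    (fst_fderiv_eq_zero_of_eventually hX hfiber w) fun L hL => ?_
  exact DFunLike.congr_fun (comp_fderiv_eq_of_fderiv_sub_eq_zero hX L (h L hL)) w

theorem euler_linearization_at_diagonal_general (hX : DifferentiableAt 𝕜 X p)
    (hfiber : ∀ᶠ q in nhds p, (X q).1 = 0)
    (heuler : ∀ L : StrongDual 𝕜 (E × E), (∀ x, L (x, x) = 0) →
      ∀ k < 2, iteratedFDeriv 𝕜 k (fun q => L (X q) - L q) p = 0)
    (hp : p.1 = p.2) :
    X p = 0 ∧
    (∀ u v : E, fderiv 𝕜 X p (u, v) = (0, v - u)) ∧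
    (fderiv 𝕜 X p).comp (fderiv 𝕜 X p) = fderiv 𝕜 X p ∧
    (∀ w : E × E, fderiv 𝕜 X p w = 0 ↔ w.1 = w.2) ∧
    (∀ w : E × E, (∃ u : E × E, fderiv 𝕜 X p u = w) ↔ w.1 = 0) ∧
    (∀ w : E × E, w.1 = 0 → fderiv 𝕜 X p w = w) := by
  have hXp : X p = 0 := eq_zero_of_forall_dual_apply_eq hp hfiber.self_of_nhds fun L hL =>
    sub_eq_zero.1 ((iteratedFDeriv_zero_eq_zero_iff (𝕜 := 𝕜)).1 (heuler L hL 0 two_pos) :)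
  have hDX : fderiv 𝕜 X p = verticalProj 𝕜 E :=
    fderiv_eq_verticalProj_of_forall_dual_fderiv_eq_zero hX hfiber fun L hL =>
      iteratedFDeriv_one_eq_zero_iff.1 (heuler L hL 1 one_lt_two)
  rw [hDX]
  exact ⟨hXp, fun u v => verticalProj_apply 𝕜 (u, v), verticalProj_comp_self 𝕜 E,
    fun _ => verticalProj_eq_zero_iff 𝕜, fun _ => exists_verticalProj_eq_iff 𝕜,
    fun _ => (verticalProj_eq_self_iff 𝕜).2⟩

end Linearization

namespace IsEulerVF

variable {d : ℕ} {X : Pt d → Pt d} {U : Set (Pt d)} {p : Pt d}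

theorem differentiableAt (hX : IsEulerVF X U) (hU : U ∈ nhds p) : DifferentiableAt ℝ X p :=
  (hX.smooth.contDiffAt hU).differentiableAt (by simp)

theorem eventually_fst_eq_zero (hX : IsEulerVF X U) (hU : U ∈ nhds p) :
    ∀ᶠ q in nhds p, (X q).1 = 0 :=
  Filter.mem_of_superset hU hX.fiber

theorem vanishesToOrder_dual_sub (hX : IsEulerVF X U) (L : StrongDual ℝ (Pt d))
    (hL : ∀ x, L (x, x) = 0) : VanishesToOrder 2 (fun q => L (X q) - L q) U := by
  have hL_diag : ∀ q ∈ Diag d ∩ U, L q = 0 := by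
    rintro ⟨x, y⟩ ⟨rfl : x = y, -⟩
    exact hL x
  simpa only [vfApply, L.fderiv] using hX.euler L L.contDiff.contDiffOn hL_diag

end IsEulerVF

/-- linearization of an Euler vector field at the diagonal: if `X` is an
Euler vector field on an open set `U ⊆ ℝ^d × ℝ^d` and `p = (a,a) ∈ Δ ∩ U`, then `X(p) = 0`
and `DX(p)(u,v) = (0, v − u)`; in particular `DX(p)` is idempotent, its kernel is the
tangent space of the diagonal, and its range is `N = {0} × ℝ^d`, on which it acts as the
identity. -/
theorem euler_linearization_at_diagonal {d : ℕ} {X : Pt d → Pt d} {U : Set (Pt d)}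
    (hU : IsOpen U) (hX : IsEulerVF X U) (p : Pt d) (hp : p ∈ Diag d ∩ U) :
    X p = 0 ∧
    (∀ u v : EuclideanSpace ℝ (Fin d), fderiv ℝ X p (u, v) = (0, v - u)) ∧
    (fderiv ℝ X p).comp (fderiv ℝ X p) = fderiv ℝ X p ∧
    (∀ w : Pt d, fderiv ℝ X p w = 0 ↔ w.1 = w.2) ∧
    (∀ w : Pt d, (∃ u : Pt d, fderiv ℝ X p u = w) ↔ w.1 = 0) ∧
    (∀ w : Pt d, w.1 = 0 → fderiv ℝ X p w = w) :=
  euler_linearization_at_diagonal_general (hX.differentiableAt (hU.mem_nhds hp.2))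
    (hX.eventually_fst_eq_zero (hU.mem_nhds hp.2))
    (fun L hL k hk => hX.vanishesToOrder_dual_sub L hL k hk p hp) hp.1
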